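/- Let k ∈ ℕ, s > 0, and let g : [0,∞) → ℂ be a C^∞ function with compact support. Then lim_{ε→0⁺} ∫₀^∞ g(u)·( (u − s − iε)^{−(k+1)} − (u − s + iε)^{−(k+1)} ) du = (2πi/k!) · g^{(k)}(s). -/

import Mathlib

open MeasureTheory Real Complex Filter

lemma hoj_ne (c : ℂ) (hc : c.im ≠ 0) (u : ℝ) : (u : ℂ) - c ≠ 0 := by
  intro h
  apply hc
  have := congrArg Complex.im h
  simpa using this

lemma hoj_cont (c : ℂ) (hc : c.im ≠ 0) (n : ℤ) : Continuous (fun u : ℝ => ((u : ℂ) - c) ^ n) :=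
  Continuous.zpow₀ (by fun_prop) n (fun u => Or.inl (hoj_ne c hc u))

lemma hoj_int (g : ℝ → ℂ) (hg : Continuous g) (hgs : HasCompactSupport g)
    (c : ℂ) (hc : c.im ≠ 0) (n : ℤ) : Integrable (fun u : ℝ => g u * ((u : ℂ) - c) ^ n) :=
  (hg.mul (hoj_cont c hc n)).integrable_of_hasCompactSupport hgs.mul_right

lemma hoj_parts (k : ℕ) (g : ℝ → ℂ)
    (hg : ContDiff ℝ (⊤ : ℕ∞) g) (hgs : HasCompactSupport g) (c : ℂ) (hc : c.im ≠ 0) :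
    ∫ u in Set.Ioi (0 : ℝ), g u * ((u : ℂ) - c) ^ (-((k + 1 : ℕ) + 1 : ℤ)) =
      ((k : ℂ) + 1)⁻¹ * (g 0 * (((0 : ℝ) : ℂ) - c) ^ (-(k + 1 : ℤ)) +
        ∫ u in Set.Ioi (0 : ℝ), deriv g u * ((u : ℂ) - c) ^ (-(k + 1 : ℤ))) := by
  have hk : (k : ℂ) + 1 ≠ 0 := by exact_mod_cast Nat.succ_ne_zero k
  have hd : ∀ u : ℝ, HasDerivAt (fun u : ℝ => g u * ((u : ℂ) - c) ^ (-(k + 1 : ℤ)))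
      (deriv g u * ((u : ℂ) - c) ^ (-(k + 1 : ℤ)) -
        ((k : ℂ) + 1) * (g u * ((u : ℂ) - c) ^ (-((k + 1 : ℕ) + 1 : ℤ)))) u := by
    intro u
    have h1 : HasDerivAt g (deriv g u) u := (hg.differentiable (by simp) u).hasDerivAt
    have h2 : HasDerivAt (fun u : ℝ => (u : ℂ) - c) 1 u :=
      (HasDerivAt.ofReal_comp (hasDerivAt_id u)).sub_const c
    have h3 := (hasDerivAt_zpow (-(k + 1 : ℤ)) ((u : ℂ) - c) (Or.inl (hoj_ne c hc u))).comp u h2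
    have h4 := h1.mul h3
    refine h4.congr_deriv ?_
    have e : (-(k + 1 : ℤ) - 1) = (-((k + 1 : ℕ) + 1 : ℤ)) := by push_cast; ring
    rw [e]
    simp only [Function.comp]
    push_cast
    ring
  have hg' : Continuous (deriv g) := hg.continuous_deriv (by simp)
  have i1 := hoj_int g hg.continuous hgs c hc (-((k + 1 : ℕ) + 1 : ℤ))
  have i2 := hoj_int (deriv g) hg' hgs.deriv c hc (-(k + 1 : ℤ))
  have hdd := funext fun u => (hd u).deriv
  have hC : ContDiff ℝ 1 (fun u : ℝ => g u * ((u : ℂ) - c) ^ (-(k + 1 : ℤ))) := by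
    rw [contDiff_one_iff_deriv]
    refine ⟨fun u => (hd u).differentiableAt, ?_⟩
    rw [hdd]
    exact (hg'.mul (hoj_cont c hc _)).sub
      (continuous_const.mul (hg.continuous.mul (hoj_cont c hc _)))
  have key := HasCompactSupport.integral_Ioi_deriv_eq hC hgs.mul_right 0
  rw [hdd, integral_sub i2.integrableOn (i1.const_mul _).integrableOn,
    integral_const_mul] at key
  rw [eq_inv_mul_iff_mul_eq₀ hk]
  linear_combination -key

lemma hoj_base (s : ℝ) (hs : 0 < s) (g : ℝ → ℂ) (hg : Continuous g) (hgs : HasCompactSupport g) :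
    Tendsto (fun ε : ℝ => ∫ u in Set.Ioi (0 : ℝ),
        g u * (((u : ℂ) - s - ε * Complex.I)⁻¹ - ((u : ℂ) - s + ε * Complex.I)⁻¹))
      (nhdsWithin 0 (Set.Ioi 0)) (nhds (2 * Real.pi * Complex.I * g s)) := by
  obtain ⟨C, hC⟩ := hgs.exists_bound_of_continuous hg
  let G : ℝ → ℂ := (Set.Ioi (0 : ℝ)).indicator g
  have hGC : ∀ x, ‖G x‖ ≤ C := fun x => (norm_indicator_le_norm_self _ _).trans (hC x)
  have hGm : Measurable G := hg.measurable.indicator measurableSet_Ioi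
  have h1 : Tendsto (fun ε : ℝ => ∫ t : ℝ, G (s + ε * t) * (2 * Complex.I * (((1 + t ^ 2)⁻¹ : ℝ) : ℂ)))
      (nhdsWithin 0 (Set.Ioi 0))
      (nhds (∫ t : ℝ, g s * (2 * Complex.I * (((1 + t ^ 2)⁻¹ : ℝ) : ℂ)))) := by
    apply tendsto_integral_filter_of_dominated_convergence (fun t => C * (2 * (1 + t ^ 2)⁻¹))
    · refine Eventually.of_forall fun ε => Measurable.aestronglyMeasurable ?_
      have : Measurable fun t : ℝ => G (s + ε * t) := hGm.comp (by fun_prop)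
      exact this.mul (by fun_prop)
    · refine Eventually.of_forall fun ε => Eventually.of_forall fun t => ?_
      have hp : (0 : ℝ) ≤ (1 + t ^ 2)⁻¹ := by positivity
      rw [norm_mul, norm_mul, norm_mul, Complex.norm_real, Complex.norm_I, Real.norm_of_nonneg hp]
      simp only [Complex.norm_ofNat, mul_one]
      exact mul_le_mul_of_nonneg_right (hGC _) (by positivity)
    · exact (integrable_inv_one_add_sq.const_mul 2).const_mul C
    · refine Eventually.of_forall fun t => Tendsto.mul_const _ ?_
      have hl : Tendsto (fun ε : ℝ => s + ε * t) (nhdsWithin 0 (Set.Ioi 0)) (nhds s) := by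
        have : Continuous fun ε : ℝ => s + ε * t := by fun_prop
        have := (this.tendsto 0).mono_left (nhdsWithin_le_nhds (s := Set.Ioi 0))
        simpa using this
      have hG : Tendsto G (nhds s) (nhds (g s)) := by
        refine (hg.tendsto s).congr' ?_
        filter_upwards [Ioi_mem_nhds hs] with x hx
        exact (Set.indicator_of_mem hx g).symm
      exact hG.comp hl
  have h2 : (∫ t : ℝ, g s * (2 * Complex.I * (((1 + t ^ 2)⁻¹ : ℝ) : ℂ))) =
      2 * Real.pi * Complex.I * g s := by
    rw [integral_const_mul, integral_const_mul, integral_complex_ofReal, integral_univ_inv_one_add_sq]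
    ring
  rw [h2] at h1
  refine h1.congr' ?_
  filter_upwards [self_mem_nhdsWithin] with ε hε
  have hε : 0 < ε := hε
  rw [← integral_indicator measurableSet_Ioi]
  set F : ℝ → ℂ := (Set.Ioi (0 : ℝ)).indicator (fun u : ℝ =>
    g u * (((u : ℂ) - s - ε * Complex.I)⁻¹ - ((u : ℂ) - s + ε * Complex.I)⁻¹)) with hF
  rw [← integral_add_left_eq_self F s]
  have h3 := Measure.integral_comp_mul_left (fun x => F (s + x)) ε
  rw [abs_of_pos (inv_pos.2 hε)] at h3
  have h4 : (∫ x, F (s + x)) = ε • ∫ x, F (s + ε * x) := by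
    rw [h3, smul_smul, mul_inv_cancel₀ hε.ne', one_smul]
  rw [h4, ← integral_smul]
  congr 1
  funext t
  simp only [hF, G, Set.indicator]
  split_ifs with h
  · have a1 : ((ε : ℂ)) ≠ 0 := by exact_mod_cast hε.ne'
    have a2 : (t : ℂ) - Complex.I ≠ 0 := hoj_ne Complex.I (by simp) t
    have a3 : (t : ℂ) + Complex.I ≠ 0 := by
      have := hoj_ne (-Complex.I) (by simp) t
      rwa [sub_neg_eq_add] at this
    have e1 : (((s + ε * t : ℝ) : ℂ) - s - ε * Complex.I) = ε * (t - Complex.I) := by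
      push_cast; ring
    have e2 : (((s + ε * t : ℝ) : ℂ) - s + ε * Complex.I) = ε * (t + Complex.I) := by
      push_cast; ring
    have e3 : (((1 + t ^ 2)⁻¹ : ℝ) : ℂ) = ((t - Complex.I) * (t + Complex.I))⁻¹ := by
      push_cast
      congr 1
      linear_combination Complex.I_sq
    rw [e1, e2, e3, Complex.real_smul]
    field_simp
    ring
  · simp

theorem higher_order_jump (k : ℕ) (s : ℝ) (hs : 0 < s) (g : ℝ → ℂ)
    (hg : ContDiff ℝ (⊤ : ℕ∞) g) (hgs : HasCompactSupport g) :
    Tendsto (fun ε : ℝ =>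
        ∫ u in Set.Ioi (0 : ℝ),
          g u * (((u : ℂ) - s - ε * Complex.I) ^ (-(k + 1 : ℤ)) -
            ((u : ℂ) - s + ε * Complex.I) ^ (-(k + 1 : ℤ))))
      (nhdsWithin 0 (Set.Ioi 0))
      (nhds (2 * Real.pi * Complex.I / (Nat.factorial k) * iteratedDeriv k g s)) := by
  induction k generalizing g with
  | zero => simpa using hoj_base s hs g hg.continuous hgs
  | succ k ih =>
    have hg' : ContDiff ℝ (⊤ : ℕ∞) (deriv g) := (contDiff_infty_iff_deriv.1 hg).2
    have h1 := ih (deriv g) hg' hgs.deriv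
    have hk : (k : ℂ) + 1 ≠ 0 := by exact_mod_cast Nat.succ_ne_zero k
    have hsc : (s : ℂ) ≠ 0 := by exact_mod_cast hs.ne'
    have h2 : Tendsto (fun ε : ℝ => g 0 * ((((0 : ℝ) : ℂ) - (s + ε * Complex.I)) ^ (-(k + 1 : ℤ)) -
        (((0 : ℝ) : ℂ) - (s - ε * Complex.I)) ^ (-(k + 1 : ℤ))))
        (nhdsWithin 0 (Set.Ioi 0)) (nhds 0) := by
      have hc : ContinuousAt (fun ε : ℝ => g 0 *
        ((((0 : ℝ) : ℂ) - (s + ε * Complex.I)) ^ (-(k + 1 : ℤ)) -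
        (((0 : ℝ) : ℂ) - (s - ε * Complex.I)) ^ (-(k + 1 : ℤ)))) 0 := by
        refine continuousAt_const.mul (ContinuousAt.sub ?_ ?_)
        · exact ContinuousAt.zpow₀ (by fun_prop) _ (Or.inl (by simpa using hsc))
        · exact ContinuousAt.zpow₀ (by fun_prop) _ (Or.inl (by simpa using hsc))
      have := hc.tendsto.mono_left (nhdsWithin_le_nhds (s := Set.Ioi 0))
      simpa using this
    have h3 := (h2.add h1).const_mul (((k : ℂ) + 1)⁻¹)
    have e : ((k : ℂ) + 1)⁻¹ * (0 + 2 * Real.pi * Complex.I / (Nat.factorial k) *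
        iteratedDeriv k (deriv g) s) =
        2 * Real.pi * Complex.I / (Nat.factorial (k + 1)) * iteratedDeriv (k + 1) g s := by
      rw [iteratedDeriv_succ', Nat.factorial_succ]
      have : (Nat.factorial k : ℂ) ≠ 0 := by exact_mod_cast Nat.factorial_ne_zero k
      push_cast
      field_simp
      ring
    rw [e] at h3
    refine h3.congr' ?_
    filter_upwards [self_mem_nhdsWithin] with ε hε
    have hε : 0 < ε := hε
    have c1 : ((s : ℂ) + ε * Complex.I).im ≠ 0 := by simpa using hε.ne'
    have c2 : ((s : ℂ) - ε * Complex.I).im ≠ 0 := by simpa using hε.ne'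
    have r1 : ∀ u : ℝ, (u : ℂ) - s - ε * Complex.I = u - (s + ε * Complex.I) := fun u => by ring
    have r2 : ∀ u : ℝ, (u : ℂ) - s + ε * Complex.I = u - (s - ε * Complex.I) := fun u => by ring
    simp only [r1, r2, mul_sub (g _), mul_sub (deriv g _)]
    have hgc' := hg'.continuous
    rw [integral_sub (hoj_int _ hgc' hgs.deriv _ c1 _).integrableOn
        (hoj_int _ hgc' hgs.deriv _ c2 _).integrableOn,
      integral_sub (hoj_int _ hg.continuous hgs _ c1 _).integrableOn
        (hoj_int _ hg.continuous hgs _ c2 _).integrableOn,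
      hoj_parts k g hg hgs _ c1, hoj_parts k g hg hgs _ c2]
    ring
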